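/- Let φ_(k) and φ_(k') be intermittent shear profiles built from a smooth φ: ℝ → ℝ supported in [−1,1], with the same parameters r ∈ (0,1), λ ≥ r^{−1} with rλ ∈ ℕ, and integer N ≥ 1, associated to two non-parallel unit vectors k, k' with Nk, Nk' ∈ ℤ³. Then for every M ∈ ℕ and every p ∈ [1, ∞] there is a constant C, depending only on φ, M, p, N, k and k', such that ‖∇^M (φ_(k) φ_(k'))‖_{L^p(T³)} ≤ C λ^M r^{2/p − 1} (with the convention 1/∞ = 0). -/

import Mathlib

/-!
STATEMENT 8: Product estimate for two intermittent shear profiles with non-parallel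
directions: ‖∇^M (φ_(k) φ_(k'))‖_{L^p(T³)} ≤ C λ^M r^{2/p − 1},
with C = C(φ, M, p, N, k, k') independent of r, λ.
-/

noncomputable section

open MeasureTheory Real
open scoped ENNReal

/-- The fundamental domain [−π,π]³ of the torus T³. -/
def dom : Set (Fin 3 → ℝ) := Set.Icc (fun _ => -π) (fun _ => π)

/-- The 2π-periodization of the rescaled profile r^{−1/2} φ(·/r). -/
def periodize (r : ℝ) (φ : ℝ → ℝ) (y : ℝ) : ℝ :=
  ∑' n : ℤ, (Real.sqrt r)⁻¹ * φ ((y + 2 * π * (n : ℝ)) / r)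

/-- The intermittent shear profile φ_(k)(x) = φ_r(λ r N k·x). -/
def shear (φ : ℝ → ℝ) (r lam : ℝ) (N : ℕ) (k : Fin 3 → ℝ) (x : Fin 3 → ℝ) : ℝ :=
  periodize r φ (lam * r * (N : ℝ) * ∑ i, k i * x i)

/-- The linear functional x ↦ k·x. -/
def kdot (k : Fin 3 → ℝ) : (Fin 3 → ℝ) →L[ℝ] ℝ :=
  ∑ i, k i • ContinuousLinearMap.proj (R := ℝ) (φ := fun _ : Fin 3 => ℝ) i

lemma kdot_apply (k x : Fin 3 → ℝ) : kdot k x = ∑ i, k i * x i := by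
  simp [kdot]

lemma periodize_local (φ : ℝ → ℝ) (hφsupp : Function.support φ ⊆ Set.Icc (-1 : ℝ) 1)
    (r : ℝ) (hr : 0 < r) (hr1 : r < 1) (y0 : ℝ) :
    ∃ n : ℤ, ∀ᶠ y in nhds y0,
      periodize r φ y = (Real.sqrt r)⁻¹ * φ ((y + 2 * π * (n : ℝ)) / r) := by
  have hpi := Real.pi_gt_three
  refine ⟨-round (y0 / (2 * π)), ?_⟩
  have h0 : |y0 + 2 * π * ((-round (y0 / (2 * π)) : ℤ) : ℝ)| ≤ π := by
    have h := abs_sub_round (y0 / (2 * π))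
    have e : y0 + 2 * π * ((-round (y0 / (2 * π)) : ℤ) : ℝ)
        = 2 * π * (y0 / (2 * π) - round (y0 / (2 * π))) := by
      push_cast
      field_simp
      ring
    rw [e, abs_mul, abs_of_pos (by positivity)]
    nlinarith
  generalize (-round (y0 / (2 * π))) = n at h0 ⊢
  filter_upwards [Metric.ball_mem_nhds y0 one_pos] with y hy
  rw [Metric.mem_ball, Real.dist_eq] at hy
  unfold periodize
  refine tsum_eq_single n fun m hm => ?_
  have hz : φ ((y + 2 * π * (m : ℝ)) / r) = 0 := by
    by_contra hne
    have hmem := hφsupp hne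
    rw [Set.mem_Icc, le_div_iff₀ hr, div_le_iff₀ hr] at hmem
    rw [abs_le] at h0
    rw [abs_lt] at hy
    rcases lt_or_gt_of_ne hm with h | h
    · have : (m : ℝ) + 1 ≤ n := by exact_mod_cast h
      nlinarith [mul_le_mul_of_nonneg_left this (by positivity : (0:ℝ) ≤ 2 * π)]
    · have : (n : ℝ) + 1 ≤ m := by exact_mod_cast h
      nlinarith [mul_le_mul_of_nonneg_left this (by positivity : (0:ℝ) ≤ 2 * π)]
  rw [hz, mul_zero]

lemma shear_local (φ : ℝ → ℝ) (hφ : ContDiff ℝ (⊤ : ℕ∞) φ)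
    (hφsupp : Function.support φ ⊆ Set.Icc (-1 : ℝ) 1)
    (N : ℕ) (k : Fin 3 → ℝ) (M : ℕ) (B W : ℝ)
    (hB : ∀ i ≤ M, ∀ t, ‖iteratedFDeriv ℝ i φ t‖ ≤ B)
    (hW : N * ‖kdot k‖ ≤ W)
    (r lam : ℝ) (hr : 0 < r) (hr1 : r < 1) (hlam : 0 ≤ lam) (x : Fin 3 → ℝ) :
    ∃ G : (Fin 3 → ℝ) → ℝ, ContDiff ℝ (⊤ : ℕ∞) G ∧ shear φ r lam N k =ᶠ[nhds x] G ∧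
      (∀ i ≤ M, ‖iteratedFDeriv ℝ i G x‖ ≤ (Real.sqrt r)⁻¹ * (B * (lam * W) ^ i)) ∧
      ((¬ ∃ n : ℤ, |lam * r * N * kdot k x + 2 * π * n| ≤ r) →
        ∀ i, iteratedFDeriv ℝ i G x = 0) := by
  obtain ⟨n, hn⟩ := periodize_local φ hφsupp r hr hr1 (lam * r * N * kdot k x)
  set c : ℝ := 2 * π * n / r with hc
  set L : (Fin 3 → ℝ) →L[ℝ] ℝ := (lam * N) • kdot k with hL
  have hφc : ContDiff ℝ (⊤ : ℕ∞) (fun t => φ (t + c)) := hφ.comp (contDiff_id.add contDiff_const)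
  have hcomp : ContDiff ℝ (⊤ : ℕ∞) ((fun t => φ (t + c)) ∘ L) := hφc.comp L.contDiff
  have hD : ∀ i : ℕ, iteratedFDeriv ℝ i ((Real.sqrt r)⁻¹ • ((fun t => φ (t + c)) ∘ L)) x =
      (Real.sqrt r)⁻¹ •
        (iteratedFDeriv ℝ i φ (L x + c)).compContinuousLinearMap fun _ => L := by
    intro i
    have hi : ((i : ℕ) : WithTop ℕ∞) ≤ ((⊤ : ℕ∞) : WithTop ℕ∞) := by
      exact_mod_cast le_top
    rw [iteratedFDeriv_const_smul_apply ((hcomp.of_le hi).contDiffAt),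
      ContinuousLinearMap.iteratedFDeriv_comp_right L hφc x hi, iteratedFDeriv_comp_add_right]
  have hLn : ‖L‖ ≤ lam * W := by
    rw [hL, norm_smul, Real.norm_eq_abs, abs_of_nonneg (by positivity), mul_assoc]
    exact mul_le_mul_of_nonneg_left hW hlam
  refine ⟨(Real.sqrt r)⁻¹ • ((fun t => φ (t + c)) ∘ L), hcomp.const_smul (Real.sqrt r)⁻¹, ?_, ?_, ?_⟩
  · have hcont : Filter.Tendsto (fun y => lam * r * N * kdot k y) (nhds x)
        (nhds (lam * r * N * kdot k x)) :=
      (continuous_const.mul (kdot k).continuous).continuousAt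
    filter_upwards [hcont.eventually hn] with y hy
    rw [shear, ← kdot_apply, hy]
    simp only [Pi.smul_apply, Function.comp, smul_eq_mul]
    congr 2
    simp only [hL, hc, ContinuousLinearMap.smul_apply, smul_eq_mul]
    field_simp
  · intro i hi
    rw [hD, norm_smul, Real.norm_eq_abs, abs_of_nonneg (by positivity)]
    refine mul_le_mul_of_nonneg_left ?_ (by positivity)
    refine (ContinuousMultilinearMap.norm_compContinuousLinearMap_le _ _).trans ?_
    rw [Finset.prod_const, Finset.card_univ, Fintype.card_fin]
    have hB0 : 0 ≤ B := (norm_nonneg _).trans (hB i hi 0)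
    exact mul_le_mul (hB i hi _) (pow_le_pow_left₀ (norm_nonneg _) hLn i) (by positivity) hB0
  · intro hx i
    have h0 : iteratedFDeriv ℝ i φ (L x + c) = 0 := by
      by_contra hne
      have h1 : L x + c ∈ tsupport φ := support_iteratedFDeriv_subset i hne
      have h2 : L x + c ∈ Set.Icc (-1 : ℝ) 1 := closure_minimal hφsupp isClosed_Icc h1
      refine hx ⟨n, ?_⟩
      have e : lam * r * N * kdot k x + 2 * π * n = r * (L x + c) := by
        simp only [hL, hc, ContinuousLinearMap.smul_apply, smul_eq_mul]
        field_simp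
      rw [e, abs_mul, abs_of_pos hr]
      have := abs_le.mpr h2
      nlinarith
    rw [hD, h0]
    ext m
    simp

/-- The measure of a one-dimensional periodic slab. -/
lemma slab_volume (R : ℝ) (hR : 0 ≤ R) (a r : ℝ) (ha : 1 ≤ a) (hr : 0 < r) (hr1 : r < 1) :
    volume {u : ℝ | |u| ≤ R ∧ ∃ n : ℤ, |a * u + 2 * π * n| ≤ r}
      ≤ ENNReal.ofReal (2 * (2 * R + 3) * r) := by
  have hpi := Real.pi_gt_three
  have ha0 : 0 < a := by linarith
  set K : ℤ := ⌊a * (R + 1)⌋ with hK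
  have hK0 : 0 ≤ K := Int.floor_nonneg.mpr (by positivity)
  have hKle : (K : ℝ) ≤ a * (R + 1) := Int.floor_le _
  have hsub : {u : ℝ | |u| ≤ R ∧ ∃ n : ℤ, |a * u + 2 * π * n| ≤ r} ⊆
      ⋃ n ∈ Finset.Icc (-K) K, Set.Icc ((-r - 2 * π * n) / a) ((r - 2 * π * n) / a) := by
    rintro u ⟨hu, n, hn⟩
    rw [abs_le] at hu hn
    have hau : a * u ≤ a * R := by nlinarith
    have hau' : -(a * R) ≤ a * u := by nlinarith
    have h1 : (n : ℝ) ≤ a * (R + 1) := by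
      by_contra! h
      nlinarith [mul_nonneg ha0.le hR]
    have h2 : ((-n : ℤ) : ℝ) ≤ a * (R + 1) := by
      push_cast
      by_contra! h
      nlinarith [mul_nonneg ha0.le hR]
    have h1' : n ≤ K := Int.le_floor.mpr h1
    have h2' : -n ≤ K := Int.le_floor.mpr h2
    simp only [Set.mem_iUnion, Finset.mem_Icc, Set.mem_Icc]
    refine ⟨n, ⟨by omega, h1'⟩, ?_, ?_⟩
    · rw [div_le_iff₀ ha0]; linarith
    · rw [le_div_iff₀ ha0]; linarith
  refine (measure_mono hsub).trans ((measure_biUnion_finset_le _ _).trans ?_)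
  have e : ∀ n ∈ Finset.Icc (-K) K, volume (Set.Icc ((-r - 2 * π * (n:ℝ)) / a) ((r - 2 * π * n) / a))
      = ENNReal.ofReal (2 * r / a) := by
    intro n _
    rw [Real.volume_Icc]
    congr 1
    field_simp
    ring
  rw [Finset.sum_congr rfl e, Finset.sum_const, Int.card_Icc, nsmul_eq_mul,
    ← ENNReal.ofReal_natCast, ← ENNReal.ofReal_mul (by positivity)]
  refine ENNReal.ofReal_le_ofReal ?_
  have hc : (((K + 1 - -K).toNat : ℕ) : ℝ) = 2 * K + 1 := by
    have : (((K + 1 - -K).toNat : ℕ) : ℤ) = 2 * K + 1 := by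
      rw [Int.toNat_of_nonneg (by omega)]; ring
    exact_mod_cast this
  rw [hc, ← mul_div_assoc, div_le_iff₀ ha0]
  have : 2 * (K : ℝ) + 1 ≤ a * (2 * R + 3) := by nlinarith
  nlinarith

/-- The matrix with rows k, k', k × k'. -/
def kmat (k k' : Fin 3 → ℝ) : Matrix (Fin 3) (Fin 3) ℝ :=
  !![k 0, k 1, k 2; k' 0, k' 1, k' 2;
     k 1 * k' 2 - k 2 * k' 1, k 2 * k' 0 - k 0 * k' 2, k 0 * k' 1 - k 1 * k' 0]

lemma kmat_det (k k' : Fin 3 → ℝ) (hk : ∑ i, k i ^ 2 = 1)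
    (hnonpar : ∀ c : ℝ, k' ≠ c • k) : (kmat k k').det ≠ 0 := by
  intro h
  have e : (kmat k k').det = (k 1 * k' 2 - k 2 * k' 1) ^ 2 + (k 2 * k' 0 - k 0 * k' 2) ^ 2
      + (k 0 * k' 1 - k 1 * k' 0) ^ 2 := by
    rw [Matrix.det_fin_three]
    simp [kmat]
    ring
  rw [e] at h
  have h1 : k 1 * k' 2 - k 2 * k' 1 = 0 := by
    refine pow_eq_zero_iff (two_ne_zero) |>.mp ?_
    nlinarith [sq_nonneg (k 1 * k' 2 - k 2 * k' 1), sq_nonneg (k 2 * k' 0 - k 0 * k' 2),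
      sq_nonneg (k 0 * k' 1 - k 1 * k' 0)]
  have h2 : k 2 * k' 0 - k 0 * k' 2 = 0 := by
    refine pow_eq_zero_iff (two_ne_zero) |>.mp ?_
    nlinarith [sq_nonneg (k 1 * k' 2 - k 2 * k' 1), sq_nonneg (k 2 * k' 0 - k 0 * k' 2),
      sq_nonneg (k 0 * k' 1 - k 1 * k' 0)]
  have h3 : k 0 * k' 1 - k 1 * k' 0 = 0 := by
    refine pow_eq_zero_iff (two_ne_zero) |>.mp ?_
    nlinarith [sq_nonneg (k 1 * k' 2 - k 2 * k' 1), sq_nonneg (k 2 * k' 0 - k 0 * k' 2),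
      sq_nonneg (k 0 * k' 1 - k 1 * k' 0)]
  rw [Fin.sum_univ_three] at hk
  refine hnonpar (k 0 * k' 0 + k 1 * k' 1 + k 2 * k' 2) ?_
  funext i
  fin_cases i
  · simp only [Fin.zero_eta, Pi.smul_apply, smul_eq_mul]
    linear_combination (-(k' 0)) * hk + (-(k 1)) * h3 + k 2 * h2
  · simp only [Fin.mk_one, Pi.smul_apply, smul_eq_mul]
    linear_combination (-(k' 1)) * hk + (k 0) * h3 - k 2 * h1
  · simp only [Fin.reduceFinMk, Pi.smul_apply, smul_eq_mul]
    linear_combination (-(k' 2)) * hk - (k 0) * h2 + k 1 * h1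

/-- The set where both profiles are active. -/
def active (r lam : ℝ) (N : ℕ) (k k' : Fin 3 → ℝ) : Set (Fin 3 → ℝ) :=
  {x | (∃ n : ℤ, |lam * r * N * kdot k x + 2 * π * n| ≤ r) ∧
    (∃ n : ℤ, |lam * r * N * kdot k' x + 2 * π * n| ≤ r)}

lemma active_volume (N : ℕ) (hN : 1 ≤ N) (k k' : Fin 3 → ℝ) (hk : ∑ i, k i ^ 2 = 1)
    (hnonpar : ∀ c : ℝ, k' ≠ c • k) :
    ∃ V : ℝ, 0 < V ∧ ∀ r lam : ℝ, 0 < r → r < 1 → r⁻¹ ≤ lam →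
      volume (active r lam N k k' ∩ dom) ≤ ENNReal.ofReal (V * r ^ 2) := by
  have hdet := kmat_det k k' hk hnonpar
  set T := Matrix.toLin' (kmat k k') with hT
  have hTdet : LinearMap.det T ≠ 0 := by rwa [hT, LinearMap.det_toLin']
  have hbdd : Bornology.IsBounded (T '' dom) := by
    have : IsCompact (T '' dom) :=
      (isCompact_Icc).image (LinearMap.continuous_of_finiteDimensional T)
    exact this.isBounded
  obtain ⟨R, hR0, hR⟩ := hbdd.exists_pos_norm_le
  have hTi : ∀ x ∈ dom, ∀ i, |T x i| ≤ R := fun x hx i =>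
    (norm_le_pi_norm (T x) i).trans (hR _ ⟨x, hx, rfl⟩)
  have hT0 : ∀ x, T x 0 = kdot k x := by
    intro x
    simp [hT, kmat, kdot_apply, Fin.sum_univ_three, Matrix.toLin'_apply, Matrix.mulVec, dotProduct]
  have hT1 : ∀ x, T x 1 = kdot k' x := by
    intro x
    simp [hT, kmat, kdot_apply, Fin.sum_univ_three, Matrix.toLin'_apply, Matrix.mulVec, dotProduct]
  refine ⟨|(LinearMap.det T)⁻¹| * ((2 * (2 * R + 3)) * (2 * (2 * R + 3)) * (2 * R)), ?_, ?_⟩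
  · have : 0 < |(LinearMap.det T)⁻¹| := abs_pos.mpr (inv_ne_zero hTdet)
    positivity
  intro r lam hr hr1 hlam
  have ha : 1 ≤ lam * r * N := by
    have h1 : 1 ≤ lam * r := by
      have := mul_le_mul_of_nonneg_right hlam hr.le
      rwa [inv_mul_cancel₀ hr.ne'] at this
    have h2 : (1 : ℝ) ≤ N := by exact_mod_cast hN
    nlinarith
  set A : Set ℝ := {u : ℝ | |u| ≤ R ∧ ∃ n : ℤ, |lam * r * N * u + 2 * π * n| ≤ r} with hA
  have hsub : active r lam N k k' ∩ dom ⊆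
      T ⁻¹' (Set.pi Set.univ ![A, A, Set.Icc (-R) R]) := by
    rintro x ⟨⟨hx1, hx2⟩, hxd⟩
    rw [Set.mem_preimage, Set.mem_univ_pi]
    intro i
    fin_cases i
    · show T x 0 ∈ A
      refine ⟨hTi x hxd 0, ?_⟩
      rw [hT0]; exact hx1
    · show T x 1 ∈ A
      refine ⟨hTi x hxd 1, ?_⟩
      rw [hT1]; exact hx2
    · show T x 2 ∈ Set.Icc (-R) R
      exact abs_le.mp (hTi x hxd 2)
  refine (measure_mono hsub).trans ?_
  have hvA := slab_volume R hR0.le (lam * r * N) r ha hr hr1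
  rw [Measure.addHaar_preimage_linearMap _ hTdet, volume_pi_pi, Fin.prod_univ_three]
  simp only [Matrix.cons_val_zero, Matrix.cons_val_one, Matrix.cons_val]
  rw [Real.volume_Icc]
  calc _ ≤ ENNReal.ofReal |(LinearMap.det T)⁻¹| * (ENNReal.ofReal (2 * (2 * R + 3) * r) *
          ENNReal.ofReal (2 * (2 * R + 3) * r) * ENNReal.ofReal (R - -R)) := by gcongr
    _ = _ := by
      rw [← ENNReal.ofReal_mul (by positivity), ← ENNReal.ofReal_mul (by positivity),
        ← ENNReal.ofReal_mul (by positivity)]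
      congr 1
      ring

lemma deriv_bound (φ : ℝ → ℝ) (hφ : ContDiff ℝ (⊤ : ℕ∞) φ)
    (hφsupp : Function.support φ ⊆ Set.Icc (-1 : ℝ) 1) (M : ℕ) :
    ∃ B : ℝ, 0 < B ∧ ∀ i ≤ M, ∀ t, ‖iteratedFDeriv ℝ i φ t‖ ≤ B := by
  have hcs : HasCompactSupport φ :=
    HasCompactSupport.intro isCompact_Icc (K := Set.Icc (-1 : ℝ) 1) fun t ht => by
      by_contra h
      exact ht (hφsupp h)
  have h : ∀ i : ℕ, ∃ b : ℝ, ∀ t, ‖iteratedFDeriv ℝ i φ t‖ ≤ b := fun i =>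
    (hcs.iteratedFDeriv (𝕜 := ℝ) i).exists_bound_of_continuous
      (hφ.continuous_iteratedFDeriv (by exact_mod_cast le_top))
  choose b hb using h
  have hb0 : ∀ i, 0 ≤ b i := fun i => (norm_nonneg _).trans (hb i 0)
  refine ⟨1 + ∑ i ∈ Finset.range (M + 1), b i, ?_, ?_⟩
  · have := Finset.sum_nonneg (s := Finset.range (M + 1)) fun i _ => hb0 i
    linarith
  · intro i hi t
    have := Finset.single_le_sum (f := b) (fun j _ => hb0 j)
      (Finset.mem_range.mpr (Nat.lt_succ_of_le hi))
    linarith [hb i t]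

theorem shear_product_Lp_estimates
    (φ : ℝ → ℝ) (hφ : ContDiff ℝ (⊤ : ℕ∞) φ)
    (hφsupp : Function.support φ ⊆ Set.Icc (-1 : ℝ) 1)
    (N : ℕ) (hN : 1 ≤ N)
    (k k' : Fin 3 → ℝ) (hk : ∑ i, k i ^ 2 = 1) (hk' : ∑ i, k' i ^ 2 = 1)
    (hkZ : ∀ i, ∃ z : ℤ, (N : ℝ) * k i = (z : ℝ))
    (hk'Z : ∀ i, ∃ z : ℤ, (N : ℝ) * k' i = (z : ℝ))
    (hnonpar : ∀ c : ℝ, k' ≠ c • k)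
    (M : ℕ) (p : ℝ≥0∞) (hp : 1 ≤ p) :
    ∃ C : ℝ, 0 < C ∧
      ∀ r lam : ℝ, 0 < r → r < 1 → r⁻¹ ≤ lam → (∃ m : ℕ, r * lam = (m : ℝ)) →
        eLpNorm
            (fun x =>
              ‖iteratedFDeriv ℝ M (fun y => shear φ r lam N k y * shear φ r lam N k' y) x‖)
            p (volume.restrict dom)
          ≤ ENNReal.ofReal (C * lam ^ M * r ^ ((2 : ℝ) / p.toReal - 1)) := by
  obtain ⟨B, hB0, hB⟩ := deriv_bound φ hφ hφsupp M
  obtain ⟨V, hV0, hV⟩ := active_volume N hN k k' hk hnonpar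
  set W : ℝ := 1 + N * ‖kdot k‖ + N * ‖kdot k'‖ with hWdef
  have hW0 : 0 < W := by positivity
  have hW1 : N * ‖kdot k‖ ≤ W := by
    have : 0 ≤ N * ‖kdot k'‖ := by positivity
    linarith
  have hW2 : N * ‖kdot k'‖ ≤ W := by
    have : 0 ≤ N * ‖kdot k‖ := by positivity
    linarith
  refine ⟨2 ^ M * B ^ 2 * W ^ M * V ^ (1 / p.toReal), by positivity, ?_⟩
  intro r lam hr hr1 hlam _
  have hlam0 : 0 < lam := (inv_pos.mpr hr).trans_le hlam
  set K : ℝ := 2 ^ M * B ^ 2 * W ^ M * lam ^ M * r⁻¹ with hKdef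
  have hK0 : 0 ≤ K := by positivity
  have hpt : ∀ x, ‖(‖iteratedFDeriv ℝ M
      (fun y => shear φ r lam N k y * shear φ r lam N k' y) x‖)‖
        ≤ (active r lam N k k').indicator (fun _ => K) x := by
    intro x
    rw [norm_norm]
    obtain ⟨G, hG, hGe, hGb, hGz⟩ :=
      shear_local φ hφ hφsupp N k M B W hB hW1 r lam hr hr1 hlam0.le x
    obtain ⟨G', hG', hGe', hGb', hGz'⟩ :=
      shear_local φ hφ hφsupp N k' M B W hB hW2 r lam hr hr1 hlam0.le x
    have he : (fun y => shear φ r lam N k y * shear φ r lam N k' y) =ᶠ[nhds x]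
        fun y => G y * G' y := hGe.mul hGe'
    rw [(he.iteratedFDeriv (𝕜 := ℝ) M).self_of_nhds]
    refine (norm_iteratedFDeriv_mul_le hG hG' x (n := M) (by exact_mod_cast le_top)).trans ?_
    by_cases hx : x ∈ active r lam N k k'
    · rw [Set.indicator_of_mem hx]
      have hs : (Real.sqrt r)⁻¹ * (Real.sqrt r)⁻¹ = r⁻¹ := by
        rw [← mul_inv, Real.mul_self_sqrt hr.le]
      calc _ ≤ ∑ i ∈ Finset.range (M + 1), (M.choose i : ℝ) *
            (r⁻¹ * B ^ 2 * (lam * W) ^ M) := by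
            refine Finset.sum_le_sum fun i hi => ?_
            have hi' : i ≤ M := Nat.lt_succ_iff.mp (Finset.mem_range.mp hi)
            rw [mul_assoc]
            refine mul_le_mul_of_nonneg_left ?_ (by positivity)
            refine (mul_le_mul (hGb i hi') (hGb' (M - i) (Nat.sub_le _ _)) (norm_nonneg _)
              (by positivity)).trans (le_of_eq ?_)
            rw [← hs]
            have hpow : (lam * W) ^ M = (lam * W) ^ i * (lam * W) ^ (M - i) := by
              rw [← pow_add, Nat.add_sub_cancel' hi']
            rw [hpow]
            ring
        _ = K := by
            rw [← Finset.sum_mul]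
            have : ∑ i ∈ Finset.range (M + 1), (M.choose i : ℝ) = 2 ^ M := by
              exact_mod_cast Nat.sum_range_choose M
            rw [this, hKdef, mul_pow]
            ring
    · rw [Set.indicator_of_notMem hx]
      refine le_of_eq (Finset.sum_eq_zero fun i _ => ?_)
      by_cases h1 : ∃ n : ℤ, |lam * r * N * kdot k x + 2 * π * n| ≤ r
      · have h2 : ¬ ∃ n : ℤ, |lam * r * N * kdot k' x + 2 * π * n| ≤ r := fun h => hx ⟨h1, h⟩
        rw [hGz' h2, norm_zero, mul_zero]
      · rw [hGz h1, norm_zero, mul_zero, zero_mul]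
  refine (eLpNorm_mono_real hpt).trans ((eLpNorm_indicator_const_le K p).trans ?_)
  have hmeas : MeasurableSet dom := measurableSet_Icc
  rw [Measure.restrict_apply' hmeas, Real.enorm_of_nonneg hK0]
  have hq : 0 ≤ 1 / p.toReal := by positivity
  calc _ ≤ ENNReal.ofReal K * ENNReal.ofReal (V * r ^ 2) ^ (1 / p.toReal) := by
        gcongr
        exact hV r lam hr hr1 hlam
    _ = _ := by
      rw [ENNReal.ofReal_rpow_of_nonneg (by positivity) hq, ← ENNReal.ofReal_mul hK0]
      congr 1
      rw [Real.mul_rpow hV0.le (by positivity), ← Real.rpow_natCast r 2, ← Real.rpow_mul hr.le,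
        Real.rpow_sub hr, Real.rpow_one, hKdef]
      have e : ((2 : ℕ) : ℝ) * (1 / p.toReal) = 2 / p.toReal := by
        push_cast
        ring
      rw [e]
      ring

end
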